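/- Suppose that every integer n > 2 can be written as k + m with k and m positive integers such that p_k + 2 and p_{p_m} + 2 are both prime. Then there are infinitely many positive integers m with p_{p_m} + 2 prime; equivalently, there are infinitely many super twin prime pairs, i.e., pairs {p, p+2} with p, p+2 and π(p) all prime. -/

import Mathlib

/-- `nthPrime n` is the `n`-th prime `p_n`, so that `p_1 = 2`, `p_2 = 3`, etc. -/
noncomputable def nthPrime (n : ℕ) : ℕ := Nat.nth Nat.Prime (n - 1)

/-- Residues `a` modulo `q` such that both `a` and `a + 2` are units. -/
def TwinClass (q : ℕ) : Type := {a : ZMod q // IsUnit a ∧ IsUnit (a + 2)}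

/-- Number of residues in `TwinClass q`. -/
noncomputable def twinCount (q : ℕ) : ℕ := Nat.card (TwinClass q)

lemma twinCount_mul {m n : ℕ} (h : m.Coprime n) :
    twinCount (m * n) = twinCount m * twinCount n := by
  unfold twinCount
  rw [← Nat.card_prod]
  refine Nat.card_congr ?_
  refine Equiv.trans (Equiv.subtypeEquiv (ZMod.chineseRemainder h).toEquiv
    (q := fun b : ZMod m × ZMod n =>
      (IsUnit b.1 ∧ IsUnit (b.1 + 2)) ∧ (IsUnit b.2 ∧ IsUnit (b.2 + 2))) ?_) ?_
  · intro a
    have h1 : IsUnit a ↔ IsUnit (ZMod.chineseRemainder h a) :=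
      (MulEquiv.isUnit_map (ZMod.chineseRemainder h)).symm
    have h2 : IsUnit (a + 2) ↔ IsUnit (ZMod.chineseRemainder h a + 2) := by
      rw [← MulEquiv.isUnit_map (ZMod.chineseRemainder h), map_add, map_ofNat]
    rw [h1, h2, Prod.isUnit_iff, Prod.isUnit_iff]
    simp only [Prod.fst_add, Prod.snd_add, Prod.fst_ofNat, Prod.snd_ofNat,
      RingEquiv.toEquiv_eq_coe, EquivLike.coe_coe]
    tauto
  · exact
      { toFun := fun b => (⟨b.1.1, b.2.1⟩, ⟨b.1.2, b.2.2⟩)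
        invFun := fun c => ⟨(c.1.1, c.2.1), c.1.2, c.2.2⟩
        left_inv := fun _ => rfl
        right_inv := fun _ => rfl }

lemma twinCount_prime {p : ℕ} (hp : p.Prime) (h2 : p ≠ 2) : twinCount p = p - 2 := by
  haveI : Fact p.Prime := ⟨hp⟩
  unfold twinCount TwinClass
  rw [Nat.card_eq_fintype_card, Fintype.card_subtype]
  have : (Finset.univ.filter fun a : ZMod p => IsUnit a ∧ IsUnit (a + 2)) = {0, -2}ᶜ := by
    ext a
    simp [isUnit_iff_ne_zero, add_eq_zero_iff_eq_neg]
  rw [this, Finset.card_compl, ZMod.card, Finset.card_pair]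
  intro h
  have h3 : ((2 : ℕ) : ZMod p) = 0 := by
    push_cast
    exact neg_eq_zero.mp h.symm
  rw [ZMod.natCast_eq_zero_iff] at h3
  exact h2 ((Nat.prime_dvd_prime_iff_eq hp Nat.prime_two).mp h3)

lemma twinCount_ratio (S : Finset ℕ) (hS : ∀ p ∈ S, p.Prime ∧ p ≠ 2) :
    0 < (∏ p ∈ S, p) ∧
    (twinCount (∏ p ∈ S, p) : ℝ) ≤
      Real.exp (-∑ p ∈ S, (1 / p : ℝ)) * (Nat.totient (∏ p ∈ S, p) : ℝ) := by
  induction S using Finset.induction_on with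
  | empty =>
    simp only [Finset.prod_empty, Finset.sum_empty, neg_zero, Real.exp_zero, Nat.totient_one]
    refine ⟨one_pos, ?_⟩
    have : twinCount 1 ≤ 1 := by
      unfold twinCount TwinClass
      rw [Nat.card_eq_fintype_card]
      exact (Fintype.card_subtype_le _).trans (by simp)
    simpa using this
  | insert p S hpS ih =>
    obtain ⟨h0, ih⟩ := ih fun r hr => hS r (Finset.mem_insert_of_mem hr)
    obtain ⟨hp, hp2⟩ := hS p (Finset.mem_insert_self _ _)
    have hcop : p.Coprime (∏ r ∈ S, r) := by
      refine Nat.Coprime.prod_right fun r hr => ?_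
      refine (Nat.coprime_primes hp (hS r (Finset.mem_insert_of_mem hr)).1).mpr ?_
      rintro rfl
      exact hpS hr
    rw [Finset.prod_insert hpS, Finset.sum_insert hpS, twinCount_mul hcop,
      Nat.totient_mul hcop, Nat.totient_prime hp, twinCount_prime hp hp2]
    refine ⟨Nat.mul_pos hp.pos h0, ?_⟩
    have h2 : 2 ≤ p := hp.two_le
    push_cast [Nat.cast_sub h2, Nat.cast_sub hp.one_le]
    rw [neg_add, Real.exp_add]
    have h2' : (2 : ℝ) ≤ p := by exact_mod_cast h2
    have key : (p : ℝ) - 2 ≤ Real.exp (-(1 / p : ℝ)) * (p - 1) := by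
      have h3 : 1 - 1 / (p : ℝ) ≤ Real.exp (-(1 / p : ℝ)) := by
        have := Real.add_one_le_exp (-(1 / p : ℝ))
        linarith
      have h4 : (p : ℝ) - 2 ≤ (1 - 1 / (p : ℝ)) * (p - 1) := by
        have : (1 - 1 / (p : ℝ)) * (p - 1) = p - 2 + 1 / p := by
          field_simp
          ring
        rw [this]
        have : (0 : ℝ) ≤ 1 / p := by positivity
        linarith
      exact h4.trans (mul_le_mul_of_nonneg_right h3 (by linarith))
    calc ((p : ℝ) - 2) * (twinCount (∏ r ∈ S, r) : ℝ)
        ≤ (Real.exp (-(1 / p : ℝ)) * (p - 1)) *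
          (Real.exp (-∑ r ∈ S, (1 / r : ℝ)) * (Nat.totient (∏ r ∈ S, r) : ℝ)) := by
          refine mul_le_mul key ih (by positivity) ?_
          exact mul_nonneg (Real.exp_pos _).le (by linarith)
      _ = _ := by ring

lemma exists_small_ratio (ε : ℝ) (hε : 0 < ε) :
    ∃ q : ℕ, 0 < q ∧ (twinCount q : ℝ) < ε * (Nat.totient q : ℝ) := by
  have h1 := not_summable_one_div_on_primes
  rw [not_summable_iff_tendsto_nat_atTop_of_nonneg] at h1
  swap
  · intro n
    exact Set.indicator_nonneg (fun _ _ => by positivity) _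
  obtain ⟨n, hn⟩ := (h1.eventually_gt_atTop (1 / 2 - Real.log ε)).exists
  let S := (Finset.range n).filter fun p => p.Prime ∧ p ≠ 2
  obtain ⟨h0, h2⟩ := twinCount_ratio S (fun p hp => (Finset.mem_filter.mp hp).2)
  refine ⟨_, h0, h2.trans_lt ?_⟩
  refine mul_lt_mul_of_pos_right ?_ (by exact_mod_cast Nat.totient_pos.mpr h0)
  rw [← Real.lt_log_iff_exp_lt hε]
  have h3 : ∑ i ∈ Finset.range n, Set.indicator {p : ℕ | p.Prime} (fun n : ℕ => (1 : ℝ) / n) i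
      ≤ ∑ p ∈ S, (1 / p : ℝ) + 1 / 2 := by
    have h4 : ∑ p ∈ S, (1 / p : ℝ) =
        ∑ p ∈ Finset.range n, if p.Prime ∧ p ≠ 2 then (1 / p : ℝ) else 0 :=
      Finset.sum_filter _ _
    have h5 : ∑ p ∈ Finset.range n, (if p = 2 then (1 / 2 : ℝ) else 0) ≤ 1 / 2 := by
      rw [Finset.sum_ite_eq']
      split_ifs <;> norm_num
    refine le_trans ?_ (add_le_add h4.ge h5)
    rw [← Finset.sum_add_distrib]
    refine Finset.sum_le_sum fun i _ => ?_
    by_cases hi : i.Prime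
    · by_cases hi2 : i = 2
      · subst hi2
        simp [Set.indicator, hi]
      · simp [Set.indicator, hi, hi2]
    · have : (0 : ℝ) ≤ if i = 2 then (1 / 2 : ℝ) else 0 := by split_ifs <;> norm_num
      simpa [Set.indicator, hi] using this
  linarith

open ArithmeticFunction ArithmeticFunction.vonMangoldt in
lemma residueClass_upper_bound {q : ℕ} [NeZero q] {a : ZMod q} (ha : IsUnit a) :
    ∃ C : ℝ, ∀ {x : ℝ} (_ : x ∈ Set.Ioc 1 2),
      ∑' n, residueClass a n / (n : ℝ) ^ x ≤ (q.totient : ℝ)⁻¹ / (x - 1) + C := by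
  have H {x : ℝ} (hx : 1 < x) :
      ∑' n, residueClass a n / (n : ℝ) ^ x =
        (LFunctionResidueClassAux a x).re + (q.totient : ℝ)⁻¹ / (x - 1) := by
    refine Complex.ofReal_injective ?_
    simp only [Complex.ofReal_tsum, Complex.ofReal_div, Complex.ofReal_cpow (Nat.cast_nonneg _),
      Complex.ofReal_natCast,
      Complex.ofReal_add, Complex.ofReal_inv, Complex.ofReal_sub, Complex.ofReal_one]
    simp_rw [← LFunctionResidueClassAux_real ha hx,
      eqOn_LFunctionResidueClassAux ha <| Set.mem_ofPred.mpr (Complex.ofReal_re x ▸ hx),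
      sub_add_cancel, LSeries, LSeries.term]
    refine tsum_congr fun n ↦ ?_
    split_ifs with hn
    · simp only [hn, residueClass_apply_zero, Complex.ofReal_zero, zero_div]
    · rfl
  have : ContinuousOn (fun x : ℝ ↦ (LFunctionResidueClassAux a x).re) (Set.Icc 1 2) :=
    Complex.continuous_re.continuousOn.comp (t := Set.univ)
      (continuousOn_LFunctionResidueClassAux a)
      (fun ⦃x⦄ a ↦ trivial) |>.comp Complex.continuous_ofReal.continuousOn fun x hx ↦ by
        simpa only [Set.mem_ofPred_eq, Complex.ofReal_re] using hx.1
  obtain ⟨C, hC⟩ := bddAbove_def.mp <| IsCompact.bddAbove_image isCompact_Icc this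
  refine ⟨C, fun {x} hx ↦ ?_⟩
  rw [H hx.1, add_comm, add_le_add_iff_left]
  exact hC _ <| Set.mem_image_of_mem (fun x : ℝ ↦ (LFunctionResidueClassAux a x).re)
    (Set.mem_Icc_of_Ioc hx)

open ArithmeticFunction ArithmeticFunction.vonMangoldt in
lemma summable_residueClass {q : ℕ} (a : ZMod q) {x : ℝ} (hx : 1 < x) :
    Summable fun n : ℕ => residueClass a n / (n : ℝ) ^ x :=
  LSeries.summable_real_of_abscissaOfAbsConv_lt <|
        (abscissaOfAbsConv_residueClass_le_one a).trans_lt <| mod_cast hx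

/-- The weight `log p / p ^ x` of the `j`-th prime (counted from `0`). -/
noncomputable def wt (x : ℝ) (j : ℕ) : ℝ :=
  Real.log (Nat.nth Nat.Prime j) / (Nat.nth Nat.Prime j : ℝ) ^ x

lemma nth_inj : Function.Injective (Nat.nth Nat.Prime) :=
  Nat.nth_injective Nat.infinite_setOfPred_prime

lemma wt_nonneg (x : ℝ) (j : ℕ) : 0 ≤ wt x j := by
  unfold wt
  have := Real.log_natCast_nonneg (Nat.nth Nat.Prime j)
  positivity

lemma wt_le_log {x : ℝ} (hx : 1 < x) (j : ℕ) : wt x j ≤ Real.log (Nat.nth Nat.Prime j) := by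
  unfold wt
  refine div_le_self (Real.log_natCast_nonneg _) ?_
  refine Real.one_le_rpow ?_ (by linarith)
  exact_mod_cast (Nat.prime_nth_prime j).one_le

lemma wt_anti {x : ℝ} (hx : 1 < x) {i j : ℕ} (hi : 1 ≤ i) (hij : i ≤ j) : wt x j ≤ wt x i := by
  unfold wt
  set a := Nat.nth Nat.Prime i
  set b := Nat.nth Nat.Prime j
  have ha : 3 ≤ a := le_trans (by omega) (Nat.add_two_le_nth_prime i)
  have hab : a ≤ b := (Nat.nth_monotone Nat.infinite_setOfPred_prime) hij
  have ha' : (3 : ℝ) ≤ a := by exact_mod_cast ha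
  have hab' : (a : ℝ) ≤ b := by exact_mod_cast hab
  have he : Real.exp 1 ≤ 3 := by
    have := Real.exp_one_lt_d9
    linarith
  have h1 : Real.log b / b ≤ Real.log a / a :=
    Real.log_div_self_antitoneOn (Set.mem_Ici.mpr (by linarith))
      (Set.mem_Ici.mpr (by linarith)) hab'
  have split : ∀ t : ℝ, 0 < t → Real.log t / t ^ x = Real.log t / t * (t ^ (x - 1))⁻¹ := by
    intro t ht
    rw [Real.rpow_sub_one ht.ne']
    field_simp
  rw [split a (by linarith), split b (by linarith)]
  refine mul_le_mul h1 ?_ (by positivity) ?_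
  · have : (0 : ℝ) < (a : ℝ) ^ (x - 1) := Real.rpow_pos_of_pos (by linarith) _
    refine inv_anti₀ this ?_
    exact Real.rpow_le_rpow (by linarith) hab' (by linarith)
  · exact div_nonneg (Real.log_natCast_nonneg _) (by linarith)

open ArithmeticFunction ArithmeticFunction.vonMangoldt in
lemma residueClass_one (n : ℕ) : residueClass (1 : ZMod 1) n = vonMangoldt n := by
  unfold residueClass
  rw [Set.indicator_of_mem]
  exact Subsingleton.elim _ _

open ArithmeticFunction ArithmeticFunction.vonMangoldt in
lemma summable_wt {x : ℝ} (hx : 1 < x) : Summable (wt x) := by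
  have h := (summable_residueClass (1 : ZMod 1) hx).comp_injective nth_inj
  refine h.congr fun j => ?_
  simp only [Function.comp, residueClass_one, wt]
  rw [vonMangoldt_apply_prime (Nat.prime_nth_prime j)]

open ArithmeticFunction ArithmeticFunction.vonMangoldt in
lemma wt_lower : ∃ C : ℝ, ∀ x : ℝ, x ∈ Set.Ioc (1 : ℝ) 2 → 1 / (x - 1) - C ≤ ∑' j, wt x j := by
  obtain ⟨C, hC⟩ := LSeries_residueClass_lower_bound (q := 1) (a := 1) isUnit_one
  have hD := summable_residueClass_non_primes_div (1 : ZMod 1)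
  refine ⟨C + ∑' n : ℕ, (if n.Prime then 0 else residueClass (1 : ZMod 1) n) / (n : ℝ),
    fun x hx => ?_⟩
  have h1 := hC hx
  simp only [Nat.totient_one, Nat.cast_one, inv_one] at h1
  have hs := summable_residueClass (1 : ZMod 1) hx.1
  let P : ℕ → ℝ := fun n => (if n.Prime then residueClass (1 : ZMod 1) n else 0) / (n : ℝ) ^ x
  have hP : ∑' j, wt x j = ∑' n, P n := by
    rw [← nth_inj.tsum_eq (f := P)]
    · refine tsum_congr fun j => ?_
      simp only [P, Nat.prime_nth_prime j, if_true, residueClass_one, wt]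
      rw [vonMangoldt_apply_prime (Nat.prime_nth_prime j)]
    · intro n hn
      rw [Nat.range_nth_of_infinite Nat.infinite_setOfPred_prime]
      by_contra hn'
      have hn'' : ¬ n.Prime := hn'
      exact hn (by simp [P, hn''])
  have hPs : Summable P := by
    refine hs.of_nonneg_of_le (fun n => ?_) (fun n => ?_)
    · have := residueClass_nonneg (1 : ZMod 1) n
      simp only [P]
      split_ifs <;> positivity
    · simp only [P]
      have := residueClass_nonneg (1 : ZMod 1) n
      split_ifs
      · exact le_rfl
      · rw [zero_div]; positivity
  have h2 : ∑' n, residueClass (1 : ZMod 1) n / (n : ℝ) ^ x ≤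
      ∑' n, (P n + (if n.Prime then 0 else residueClass (1 : ZMod 1) n) / (n : ℝ)) := by
    refine Summable.tsum_le_tsum (fun n => ?_) hs (hPs.add hD)
    simp only [P]
    split_ifs
    · simp
    · rw [zero_div, zero_add]
      rcases n.eq_zero_or_pos with rfl | hn
      · simp
      · refine div_le_div_of_nonneg_left (residueClass_nonneg _ _) (mod_cast hn) ?_
        conv_lhs => rw [← Real.rpow_one n]
        exact Real.rpow_le_rpow_of_exponent_le (by exact_mod_cast hn) hx.1.le
  rw [hPs.tsum_add hD, ← hP] at h2
  linarith

/-- Indices (from `0`) of primes `p` with `p + 2` prime. -/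
def twinIdx : Set ℕ := {j | (Nat.nth Nat.Prime j + 2).Prime}

open ArithmeticFunction ArithmeticFunction.vonMangoldt in
lemma twin_upper (q : ℕ) (hq : 0 < q) :
    ∃ C : ℝ, ∀ x : ℝ, x ∈ Set.Ioc (1 : ℝ) 2 →
      ∑' j, twinIdx.indicator (wt x) j ≤
        (twinCount q : ℝ) * ((q.totient : ℝ)⁻¹ / (x - 1)) + C := by
  classical
  haveI : NeZero q := ⟨hq.ne'⟩
  let A : Finset (ZMod q) := Finset.univ.filter fun a => IsUnit a ∧ IsUnit (a + 2)
  have hA : twinCount q = A.card := by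
    unfold twinCount TwinClass
    rw [Nat.card_eq_fintype_card, Fintype.card_subtype]
  have hb : ∀ a : ZMod q, ∃ C : ℝ, a ∈ A → ∀ x : ℝ, x ∈ Set.Ioc (1 : ℝ) 2 →
      ∑' n, residueClass a n / (n : ℝ) ^ x ≤ (q.totient : ℝ)⁻¹ / (x - 1) + C := by
    intro a
    by_cases ha : a ∈ A
    · obtain ⟨C, hC⟩ := residueClass_upper_bound (Finset.mem_filter.mp ha).2.1
      exact ⟨C, fun _ x hx => hC hx⟩
    · exact ⟨0, fun h => absurd h ha⟩
  choose C hC using hb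
  let E : ℕ → ℝ := fun j => if j ∈ Finset.range q then Real.log (Nat.nth Nat.Prime j) else 0
  have hE : Summable E := summable_of_ne_finset_zero (s := Finset.range q) fun j hj => by
    simp only [E, if_neg hj]
  refine ⟨∑ a ∈ A, C a + ∑' j, E j, fun x hx => ?_⟩
  let R : ZMod q → ℕ → ℝ := fun a j =>
    residueClass a (Nat.nth Nat.Prime j) / (Nat.nth Nat.Prime j : ℝ) ^ x
  have hR0 : ∀ a j, 0 ≤ R a j := fun a j => by
    have := residueClass_nonneg a (Nat.nth Nat.Prime j)
    simp only [R]
    positivity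
  have hR : ∀ a, Summable (R a) := fun a =>
    (summable_residueClass a hx.1).comp_injective nth_inj
  have hRA : Summable fun j => ∑ a ∈ A, R a j := summable_sum fun a _ => hR a
  have step1 : ∑' j, twinIdx.indicator (wt x) j ≤ ∑' j, (∑ a ∈ A, R a j + E j) := by
    refine Summable.tsum_le_tsum (fun j => ?_) ((summable_wt hx.1).indicator _) (hRA.add hE)
    have hsum0 : 0 ≤ ∑ a ∈ A, R a j := Finset.sum_nonneg fun a _ => hR0 a j
    have hE0 : 0 ≤ E j := by
      simp only [E]
      split_ifs
      · exact Real.log_natCast_nonneg _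
      · exact le_rfl
    by_cases hj : j ∈ twinIdx
    · rw [Set.indicator_of_mem hj]
      by_cases hjq : j < q
      · have : E j = Real.log (Nat.nth Nat.Prime j) := if_pos (Finset.mem_range.mpr hjq)
        have := wt_le_log hx.1 j
        linarith
      · have hpj := Nat.prime_nth_prime j
        have hlt : q < Nat.nth Nat.Prime j := by
          have := Nat.add_two_le_nth_prime j
          omega
        have hmem : ((Nat.nth Nat.Prime j : ℕ) : ZMod q) ∈ A := by
          refine Finset.mem_filter.mpr ⟨Finset.mem_univ _, ?_, ?_⟩
          · rw [ZMod.isUnit_iff_coprime]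
            exact (Nat.coprime_of_lt_prime hq.ne' hlt hpj)
          · have : ((Nat.nth Nat.Prime j : ℕ) : ZMod q) + 2 =
                ((Nat.nth Nat.Prime j + 2 : ℕ) : ZMod q) := by push_cast; rfl
            rw [this, ZMod.isUnit_iff_coprime]
            exact (Nat.coprime_of_lt_prime hq.ne' (by omega) hj)
        have h1 : R ((Nat.nth Nat.Prime j : ℕ) : ZMod q) j = wt x j := by
          simp only [R, wt, residueClass]
          rw [Set.indicator_of_mem (by rfl), vonMangoldt_apply_prime hpj]
        have h2 := Finset.single_le_sum (f := fun a => R a j) (fun a _ => hR0 a j) hmem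
        simp only [h1] at h2
        linarith
    · rw [Set.indicator_of_notMem hj]
      linarith
  rw [hRA.tsum_add hE, Summable.tsum_finsetSum fun a _ => hR a] at step1
  have step2 : ∑ a ∈ A, ∑' j, R a j ≤ ∑ a ∈ A, ((q.totient : ℝ)⁻¹ / (x - 1) + C a) := by
    refine Finset.sum_le_sum fun a ha => le_trans ?_ (hC a ha x hx)
    exact tsum_comp_le_tsum_of_inj (summable_residueClass a hx.1)
      (fun n => div_nonneg (residueClass_nonneg a n) (by positivity)) nth_inj
  rw [Finset.sum_add_distrib, Finset.sum_const, nsmul_eq_mul, ← hA] at step2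
  linarith

/-- There are arbitrarily long runs of consecutive primes without twins. -/
lemma no_window (N : ℕ) (hN : 0 < N)
    (h : ∀ j, ∃ i ∈ Finset.range N, j + (N - i) ∈ twinIdx) : False := by
  have hN' : (0 : ℝ) < N := by exact_mod_cast hN
  obtain ⟨q, hq, hqr⟩ := exists_small_ratio (1 / (2 * N)) (by positivity)
  obtain ⟨C1, h1⟩ := wt_lower
  obtain ⟨C2, h2⟩ := twin_upper q hq
  have hφ : (0 : ℝ) < q.totient := by exact_mod_cast Nat.totient_pos.mpr hq
  let D : ℝ := ∑ j ∈ Finset.range N, Real.log (Nat.nth Nat.Prime j)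
  have key : ∀ x ∈ Set.Ioc (1 : ℝ) 2, 1 / (x - 1) ≤ 2 * (C1 + D + N * C2) := by
    intro x hx
    have hsw := summable_wt hx.1
    have hG := hsw.indicator twinIdx
    have hG0 : ∀ j, 0 ≤ twinIdx.indicator (wt x) j :=
      fun j => Set.indicator_nonneg (fun _ _ => wt_nonneg x _) _
    have hinj : ∀ i : ℕ, Function.Injective fun j : ℕ => j + (N - i) :=
      fun i => add_left_injective _
    have hGs : ∀ i : ℕ, Summable fun j => twinIdx.indicator (wt x) (j + (N - i)) :=
      fun i => hG.comp_injective (hinj i)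
    have e1 : ∑' j, wt x (j + N) ≤
        ∑' j, ∑ i ∈ Finset.range N, twinIdx.indicator (wt x) (j + (N - i)) := by
      refine Summable.tsum_le_tsum (fun j => ?_)
        (hsw.comp_injective (add_left_injective N)) (summable_sum fun i _ => hGs i)
      obtain ⟨i, hi, hij⟩ := h j
      have hi' := Finset.mem_range.mp hi
      refine le_trans ?_ (Finset.single_le_sum
        (f := fun i => twinIdx.indicator (wt x) (j + (N - i))) (fun i _ => hG0 _) hi)
      rw [Set.indicator_of_mem hij]
      exact wt_anti hx.1 (by omega) (by omega)
    rw [Summable.tsum_finsetSum fun i _ => hGs i] at e1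
    have e2 : ∑ i ∈ Finset.range N, ∑' j, twinIdx.indicator (wt x) (j + (N - i)) ≤
        ∑ i ∈ Finset.range N, ∑' j, twinIdx.indicator (wt x) j :=
      Finset.sum_le_sum fun i _ => tsum_comp_le_tsum_of_inj hG hG0 (hinj i)
    rw [Finset.sum_const, Finset.card_range, nsmul_eq_mul] at e2
    have e3 : ∑ j ∈ Finset.range N, wt x j ≤ D :=
      Finset.sum_le_sum fun j _ => wt_le_log hx.1 j
    have e4 := hsw.sum_add_tsum_nat_add N
    have e5 := h1 x hx
    have e6 := mul_le_mul_of_nonneg_left (h2 x hx) hN'.le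
    have hx0 : 0 < x - 1 := sub_pos.mpr hx.1
    have e7 : N * ((twinCount q : ℝ) * ((q.totient : ℝ)⁻¹ / (x - 1))) ≤ (1 / 2) * (1 / (x - 1)) := by
      have : N * ((twinCount q : ℝ) * ((q.totient : ℝ)⁻¹ / (x - 1))) =
        (N * (twinCount q : ℝ) / q.totient) * (1 / (x - 1)) := by
        field_simp
      rw [this]
      refine mul_le_mul_of_nonneg_right ?_ (by positivity)
      rw [div_le_iff₀ hφ]
      have := mul_le_mul_of_nonneg_left hqr.le hN'.le
      have e : (N : ℝ) * (1 / (2 * N) * q.totient) = 1 / 2 * q.totient := by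
        field_simp
      linarith
    linarith
  set K := 2 * (C1 + D + N * C2)
  have hK : 1 ≤ K := by
    have := key 2 ⟨by norm_num, le_rfl⟩
    norm_num at this
    exact this
  have := key (1 + 1 / (K + 1)) ⟨by
    have : 0 < 1 / (K + 1) := by positivity
    linarith, by
    have : 1 / (K + 1) ≤ 1 := by
      rw [div_le_one (by linarith)]
      linarith
    linarith⟩
  rw [add_sub_cancel_left, one_div_one_div] at this
  linarith

theorem super_twin_prime_conjecture_implies_infinitude
    (h : ∀ n : ℕ, 2 < n → ∃ k m : ℕ, 0 < k ∧ 0 < m ∧ n = k + m ∧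
      (nthPrime k + 2).Prime ∧ (nthPrime (nthPrime m) + 2).Prime) :
    {m : ℕ | 0 < m ∧ (nthPrime (nthPrime m) + 2).Prime}.Infinite ∧
      {p : ℕ | p.Prime ∧ (p + 2).Prime ∧ (Nat.primeCounting p).Prime}.Infinite := by
  have hinf : {m : ℕ | 0 < m ∧ (nthPrime (nthPrime m) + 2).Prime}.Infinite := by
    intro hfin
    obtain ⟨M, hM⟩ := hfin.bddAbove
    refine no_window (M + 2) (by omega) fun j => ?_
    obtain ⟨k, m, hk, hm, hn, h1, h2⟩ := h (j + M + 3) (by omega)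
    have hmM : m ≤ M := hM ⟨hm, h2⟩
    refine ⟨m, Finset.mem_range.mpr (by omega), ?_⟩
    have : j + (M + 2 - m) = k - 1 := by omega
    rw [this]
    exact h1
  refine ⟨hinf, ?_⟩
  have hpos : ∀ n, 0 < nthPrime n := fun n => (Nat.prime_nth_prime _).pos
  have hinjn : ∀ a b, 0 < a → 0 < b → nthPrime a = nthPrime b → a = b := by
    intro a b ha hb hab
    have : a - 1 = b - 1 := nth_inj hab
    omega
  have hinj : Set.InjOn (fun m => nthPrime (nthPrime m))
      {m : ℕ | 0 < m ∧ (nthPrime (nthPrime m) + 2).Prime} := by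
    intro a ha b hb hab
    exact hinjn _ _ ha.1 hb.1 (hinjn _ _ (hpos _) (hpos _) hab)
  refine (hinf.image hinj).mono ?_
  rintro _ ⟨m, hm, rfl⟩
  refine ⟨Nat.prime_nth_prime _, hm.2, ?_⟩
  have : Nat.primeCounting (nthPrime (nthPrime m)) = nthPrime m := by
    unfold Nat.primeCounting Nat.primeCounting'
    have h1 := hpos m
    generalize nthPrime m = r at *
    unfold nthPrime
    rw [Nat.count_nth_succ_of_infinite Nat.infinite_setOfPred_prime]
    omega
  simp only [this]
  exact Nat.prime_nth_prime _
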